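/- Limiting absorption for H(𝔢,V): Let d ≥ 3 and let 𝔢 be a dispersion relation of class C³ satisfying condition (M). There exists a constant c(𝔢) > 0, depending only on 𝔢, such that for every potential V : Γ → ℝ with Φ_{2,2}(V) < c(𝔢) there is a constant c′ < ∞ with |⟨δ_x, (z − H(𝔢,V))^{−1} δ_y⟩| ≤ c′·(1+|x|)²·(1+|y|)² for all z ∈ ℂ∖ℝ and all x, y ∈ Γ. -/

import Mathlib

open MeasureTheory Complex Real
open scoped ENNReal

noncomputable section

namespace LatSch

/-- The lattice `Γ = ℤ^d`. -/
abbrev Γd (d : ℕ) := Fin d → ℤ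

/-- The Hilbert space `ℓ²(Γ)`. -/
abbrev L2 (d : ℕ) := lp (fun _ : Γd d => ℂ) 2

/-- Euclidean norm of a lattice point. -/
def lnorm {d : ℕ} (x : Γd d) : ℝ := Real.sqrt (∑ i, ((x i : ℝ)) ^ 2)

/-- The standard basis vector `δ_x` of `ℓ²(Γ)`. -/
def delta {d : ℕ} (x : Γd d) : L2 d := lp.single 2 x 1

local notation "⟪" a ", " b "⟫" => @inner ℂ _ _ a b

/-- The cube `[-π, π]^d`, a fundamental domain of the torus. -/
def torusBox (d : ℕ) : Set (Fin d → ℝ) := Set.univ.pi fun _ => Set.Icc (-π) π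

/-- `⟨p, m⟩` for `p ∈ ℝ^d`, `m ∈ ℤ^d`. -/
def dotZ {d : ℕ} (p : Fin d → ℝ) (m : Γd d) : ℝ := ∑ i, p i * (m i : ℝ)

/-- Fourier coefficient `f̂(m) = (2π)^{-d} ∫_{[-π,π]^d} f(p) e^{i⟨p,m⟩} dp`. -/
def fCoeff {d : ℕ} (f : (Fin d → ℝ) → ℝ) (m : Γd d) : ℂ :=
  ((1 / (2 * π) ^ d : ℝ) : ℂ) *
    ∫ p in torusBox d, (f p : ℂ) * Complex.exp (Complex.I * (dotZ p m : ℝ))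

/-- `H` is the Fourier multiplier (hopping matrix) `h(f)`, characterized by its
matrix elements `⟨δ_x, H δ_y⟩ = f̂(x - y)`. -/
def IsMultiplier {d : ℕ} (f : (Fin d → ℝ) → ℝ) (H : L2 d →L[ℂ] L2 d) : Prop :=
  ∀ x y : Γd d, ⟪delta x, H (delta y)⟫ = fCoeff f (x - y)

/-- `M` is the operator of multiplication by the potential `V`. -/
def IsMulOp {d : ℕ} (V : Γd d → ℝ) (M : L2 d →L[ℂ] L2 d) : Prop :=
  ∀ (ψ : L2 d) (x : Γd d), (M ψ : ∀ _ : Γd d, ℂ) x = (V x : ℂ) * (ψ : ∀ _ : Γd d, ℂ) x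

/-- Partial derivative `∂_{p_k} f (p)`. -/
def pd {d : ℕ} (f : (Fin d → ℝ) → ℝ) (k : Fin d) (p : Fin d → ℝ) : ℝ :=
  fderiv ℝ f p (Pi.single k 1)

/-- `|∇f|²(p) = Σ_k (∂_{p_k} f(p))²`. -/
def gradSq {d : ℕ} (f : (Fin d → ℝ) → ℝ) (p : Fin d → ℝ) : ℝ := ∑ k, pd f k p ^ 2

/-- The Hessian matrix of `f` at `p`. -/
def hess {d : ℕ} (f : (Fin d → ℝ) → ℝ) (p : Fin d → ℝ) : Matrix (Fin d) (Fin d) ℝ :=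
  Matrix.of fun i j => fderiv ℝ (fun q => fderiv ℝ f q (Pi.single j 1)) p (Pi.single i 1)

/-- All critical points of `f` are nondegenerate (`f` is a Morse function). -/
def IsMorse {d : ℕ} (f : (Fin d → ℝ) → ℝ) : Prop :=
  ∀ p, fderiv ℝ f p = 0 → (hess f p).det ≠ 0

/-- `2πℤ^d`-periodicity. -/
def Periodic2pi {d : ℕ} (f : (Fin d → ℝ) → ℝ) : Prop :=
  ∀ (p : Fin d → ℝ) (m : Γd d), f (p + fun i => 2 * π * (m i : ℝ)) = f p

/-- A dispersion relation: a `2πℤ^d`-periodic function with minimum `0`. -/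
def IsDispersion {d : ℕ} (f : (Fin d → ℝ) → ℝ) : Prop :=
  Periodic2pi f ∧ (∀ p, 0 ≤ f p) ∧ (∃ p, f p = 0)

/-- Condition (M): `𝔢` and `|∇𝔢|²` are Morse functions. -/
def CondM {d : ℕ} (f : (Fin d → ℝ) → ℝ) : Prop := IsMorse f ∧ IsMorse (gradSq f)

/-- `Φ_{m,n}(V) = (Σ_x |V(x)|^{1/m} (1+|x|)^n)^m`, valued in `[0,∞]`. -/
def Phi {d : ℕ} (m n : ℕ) (V : Γd d → ℝ) : ℝ≥0∞ :=
  (∑' x : Γd d, ENNReal.ofReal (|V x| ^ ((1 : ℝ) / m) * (1 + lnorm x) ^ n)) ^ m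

/-- The set of eigenvectors of `H` (with real eigenvalue). -/
def eigvecs {d : ℕ} (H : L2 d →L[ℂ] L2 d) : Set (L2 d) :=
  {ψ : L2 d | ψ ≠ 0 ∧ ∃ μ : ℝ, H ψ = (μ : ℂ) • ψ}

/-- `N_pp[H]`: the Hilbert-space dimension of the closed linear span of all
eigenvectors of `H`. -/
def Npp {d : ℕ} (H : L2 d →L[ℂ] L2 d) : Cardinal :=
  Module.rank ℂ ((Submodule.span ℂ (eigvecs H)).topologicalClosure)

/-- The Fourier transform `ĝ_x(p) = (i/2·|∇𝔢(p)|² + ⟨∇𝔢(p), x⟩) e^{-i⟨p,x⟩}`. -/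
def ghat {d : ℕ} (e : (Fin d → ℝ) → ℝ) (x : Γd d) (p : Fin d → ℝ) : ℂ :=
  ((Complex.I / 2) * ((gradSq e p : ℝ) : ℂ) + ((∑ k, pd e k p * (x k : ℝ) : ℝ) : ℂ)) *
    Complex.exp (-(Complex.I * (dotZ p x : ℝ)))

/-- `g : Γ → ℓ²(Γ)` is the family of vectors `g_x` with Fourier transform `ĝ_x`. -/
def IsGVec {d : ℕ} (e : (Fin d → ℝ) → ℝ) (g : Γd d → L2 d) : Prop :=
  ∀ x m : Γd d,
    (g x : ∀ _ : Γd d, ℂ) m =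
      ((1 / (2 * π) ^ d : ℝ) : ℂ) *
        ∫ p in torusBox d, ghat e x p * Complex.exp (Complex.I * (dotZ p m : ℝ))

/-- `C` is the bounded self-adjoint realization
`C_V = Σ_x i V(x) (|δ_x⟩⟨g_x| - |g_x⟩⟨δ_x|)` of the commutator `i[V, A(𝔢)]`. -/
def IsCommOp {d : ℕ} (V : Γd d → ℝ) (g : Γd d → L2 d) (C : L2 d →L[ℂ] L2 d) : Prop :=
  ∀ ψ : L2 d,
    HasSum (fun x : Γd d =>
      (Complex.I * (V x : ℂ)) • (⟪g x, ψ⟫ • delta x - ⟪delta x, ψ⟫ • g x)) (C ψ)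

/-- `R` is the resolvent `(z - H)^{-1}`. -/
def IsResolventAt {d : ℕ} (H : L2 d →L[ℂ] L2 d) (z : ℂ) (R : L2 d →L[ℂ] L2 d) : Prop :=
  R.comp (z • (1 : L2 d →L[ℂ] L2 d) - H) = 1 ∧ (z • (1 : L2 d →L[ℂ] L2 d) - H).comp R = 1

/-- `‖f‖_{C^m} ≤ C`: all partial derivatives of order `≤ m` are bounded by `C`. -/
def CmNormLe {d : ℕ} (m : ℕ) (f : (Fin d → ℝ) → ℝ) (C : ℝ) : Prop :=
  ∀ j : ℕ, j ≤ m → ∀ (p : Fin d → ℝ) (k : Fin j → Fin d),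
    |iteratedFDeriv ℝ j f p (fun i => Pi.single (k i) 1)| ≤ C

/-- `K(𝔢) ≥ K`: at every critical point, every eigenvalue `λ` of the Hessian
satisfies `|λ|^{1/2} ≥ K`. -/
def MinCurvGe {d : ℕ} (f : (Fin d → ℝ) → ℝ) (K : ℝ) : Prop :=
  ∀ p, fderiv ℝ f p = 0 → ∀ (lam : ℝ) (v : Fin d → ℝ), v ≠ 0 →
    (hess f p).mulVec v = lam • v → K ^ 2 ≤ |lam|

/-- The set of thresholds `Thr(𝔢) = 𝔢(Crit(𝔢))`. -/
def Thr {d : ℕ} (f : (Fin d → ℝ) → ℝ) : Set ℝ := f '' {p | fderiv ℝ f p = 0}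


/-- The number of strictly negative eigenvalues of `C`, counted with multiplicity:
the dimension of the span of eigenvectors with strictly negative eigenvalue. -/
def NegCount {d : ℕ} (C : L2 d →L[ℂ] L2 d) : Cardinal :=
  Module.rank ℂ (Submodule.span ℂ
    {ψ : L2 d | ψ ≠ 0 ∧ ∃ μ : ℝ, μ < 0 ∧ C ψ = (μ : ℂ) • ψ})

/-- The number of strictly positive eigenvalues of `C`, counted with multiplicity. -/
def PosCount {d : ℕ} (C : L2 d →L[ℂ] L2 d) : Cardinal :=
  Module.rank ℂ (Submodule.span ℂ
    {ψ : L2 d | ψ ≠ 0 ∧ ∃ μ : ℝ, 0 < μ ∧ C ψ = (μ : ℂ) • ψ})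

/-!
**Idea.** By the Lippmann–Schwinger equation a small potential only perturbs the free resolvent, so
it suffices to bound the free Green function `∫ e^{i⟨p,m⟩} (z - 𝔢(p))⁻¹ dp` by `C (1 + |m|)`,
uniformly in `z ∉ ℝ`. Write `(z - 𝔢)⁻¹ = L' ∘ 𝔢` with `L(t) = -log (z - t)` and integrate by parts
along the regularized field `∇𝔢 / (|∇𝔢|² + η)`, for which the derivative of `L ∘ 𝔢` tends to
`L' ∘ 𝔢` as `η → 0`. The remaining integrand is `O((1 + |m|) |L ∘ 𝔢| |∇𝔢|⁻²)`, and `|∇𝔢|⁻²` is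
integrable near the nondegenerate critical points because `d ≥ 3`.

The logarithm is unbounded, so Young's inequality splits `|log (z - 𝔢)| |∇𝔢|⁻²` into
`|z - 𝔢|^{-1/3}` and `|∇𝔢|^{-8/3}`. The latter is integrable since `8/3 < 3`; the former is
controlled by the same integration by parts with `m = 0` and the bounded primitive
`L(t) = -(3/2) (z - t)^{2/3}`, because `|w|^{-1/3} ≤ 2 Re w^{-1/3}` for the principal branch.
-/

section

variable {d : ℕ}

/-! ### Characters and Fourier coefficients -/

/-- The character `p ↦ e^{i⟨p,m⟩}` of the torus, in the form occurring in `fCoeff`. -/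
def character (m : Γd d) (p : Fin d → ℝ) : ℂ := Complex.exp (Complex.I * (dotZ p m : ℝ))

theorem norm_character (m : Γd d) (p : Fin d → ℝ) : ‖character m p‖ = 1 := by
  rw [character, mul_comm, Complex.norm_exp_ofReal_mul_I]

theorem character_zero (p : Fin d → ℝ) : character 0 p = 1 := by
  simp [character, dotZ]

theorem character_add (m n : Γd d) (p : Fin d → ℝ) :
    character (m + n) p = character m p * character n p := by
  rw [character, character, character, ← Complex.exp_add, ← mul_add, ← Complex.ofReal_add]
  simp only [dotZ, Pi.add_apply, Int.cast_add, mul_add, Finset.sum_add_distrib]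

theorem character_neg (m : Γd d) (p : Fin d → ℝ) :
    character (-m) p = (starRingEnd ℂ) (character m p) := by
  rw [character, character, ← Complex.exp_conj]
  simp [dotZ]

theorem contDiff_character (m : Γd d) {n : WithTop ℕ∞} : ContDiff ℝ n (character m) := by
  have hdot : ContDiff ℝ n fun p : Fin d → ℝ => dotZ p m := by unfold dotZ; fun_prop
  exact (contDiff_const.mul (Complex.ofRealCLM.contDiff.comp hdot)).cexp

theorem continuous_character (m : Γd d) : Continuous (character m) :=
  (contDiff_character m (n := 0)).continuous

theorem character_add_period (m : Γd d) (p : Fin d → ℝ) (n : Γd d) :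
    character m (p + fun i => 2 * π * (n i : ℝ)) = character m p := by
  have hdot : dotZ (p + fun i => 2 * π * (n i : ℝ)) m =
      dotZ p m + ((∑ i, n i * m i : ℤ) : ℝ) * (2 * π) := by
    simp only [dotZ, Pi.add_apply, add_mul, Finset.sum_add_distrib, Int.cast_sum, Int.cast_mul,
      Finset.sum_mul]
    congr 1
    exact Finset.sum_congr rfl fun i _ => by ring
  rw [character, character, Complex.exp_eq_exp_iff_exists_int, hdot]
  refine ⟨∑ i, n i * m i, ?_⟩
  push_cast
  ring

theorem fderiv_character_single (m : Γd d) (p : Fin d → ℝ) (k : Fin d) :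
    fderiv ℝ (character m) p (Pi.single k 1) = Complex.I * (m k : ℝ) * character m p := by
  have hdot : HasDerivAt (fun t : ℝ => dotZ (p + t • Pi.single k 1) m) (m k : ℝ) 0 := by
    have heq : (fun t : ℝ => dotZ (p + t • Pi.single k 1) m) =
        fun t => dotZ p m + t * (m k : ℝ) := by
      funext t
      simp [dotZ, add_mul, Finset.sum_add_distrib, Pi.single_apply]
    rw [heq]
    simpa using ((hasDerivAt_id (0 : ℝ)).mul_const (m k : ℝ)).const_add (dotZ p m)
  have hdiff : DifferentiableAt ℝ (character m) p :=
    (contDiff_character m (n := 1)).differentiable (by norm_num) p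
  rw [← hdiff.lineDeriv_eq_fderiv, lineDeriv]
  refine (((hdot.ofReal_comp.const_mul Complex.I).cexp).congr_deriv ?_).deriv
  rw [zero_smul, add_zero, character]
  ring

theorem isCompact_torusBox (d : ℕ) : IsCompact (torusBox d) :=
  isCompact_univ_pi fun _ => isCompact_Icc

/-- The Fourier coefficient `(2π)^{-d} ∫_{[-π,π]^d} f(p) e^{i⟨p,m⟩} dp` of a complex-valued
function; `fCoeff` is the case of real-valued `f`. -/
def torusCoeff (f : (Fin d → ℝ) → ℂ) (m : Γd d) : ℂ :=
  ((1 / (2 * π) ^ d : ℝ) : ℂ) * ∫ p in torusBox d, f p * character m p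

theorem torusCoeff_mul_character (f : (Fin d → ℝ) → ℂ) (m n : Γd d) :
    torusCoeff (fun p => f p * character n p) m = torusCoeff f (m + n) := by
  simp only [torusCoeff, character_add, mul_assoc, mul_comm (character n _)]

theorem conj_torusCoeff (f : (Fin d → ℝ) → ℂ) (m : Γd d) :
    (starRingEnd ℂ) (torusCoeff f m) =
      torusCoeff (fun p => (starRingEnd ℂ) (f p)) (-m) := by
  simp only [torusCoeff, map_mul, Complex.conj_ofReal, ← integral_conj, character_neg]

section Plancherel

open scoped Pointwise

-- Mathlib's `UnitAddTorus.mFourierBasis` is stated for the normalized Haar measure, which is not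
-- the global `volume` on `UnitAddCircle`.
attribute [local instance] instMeasureSpaceUnitAddCircle
  instIsProbabilityMeasureUnitAddCircleVolume

/-- The representative in the cube `[-π, π]^d` of a point of the torus `(ℝ/ℤ)^d`. The reflection
matches the sign of the exponent in `fCoeff` with Mathlib's convention. -/
def torusLift (t : UnitAddTorus (Fin d)) : Fin d → ℝ :=
  (-(2 * π)) • (UnitAddTorus.measurableEquivPiIoc (fun _ => -(1 / 2)) t : Fin d → ℝ)

theorem measurable_torusLift : Measurable (torusLift (d := d)) :=
  (measurable_subtype_coe.comp
    (UnitAddTorus.measurableEquivPiIoc fun _ => -(1 / 2)).measurable).const_smul (-(2 * π))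

theorem torusLift_mem_torusBox (t : UnitAddTorus (Fin d)) : torusLift t ∈ torusBox d := by
  intro i _
  have hi := (UnitAddTorus.measurableEquivPiIoc (fun _ => -(1 / 2)) t).2 i
  have := Real.pi_pos
  simp only [torusLift, Pi.smul_apply, smul_eq_mul]
  constructor <;> nlinarith [hi.1, hi.2]

theorem character_torusLift (m : Γd d) (t : UnitAddTorus (Fin d)) :
    character m (torusLift t) = UnitAddTorus.mFourier (-m) t := by
  set x := UnitAddTorus.measurableEquivPiIoc (fun _ => -(1 / 2)) t with hx
  have ht : t = fun i => ((x : Fin d → ℝ) i : UnitAddCircle) := by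
    rw [← UnitAddTorus.coe_symm_measurableEquivPiIoc_apply, hx, MeasurableEquiv.symm_apply_apply]
  rw [torusLift, ← hx, ht]
  simp only [character, dotZ, UnitAddTorus.mFourier, ContinuousMap.coe_mk, fourier_coe_apply]
  rw [← Complex.exp_sum]
  congr 1
  push_cast
  rw [Finset.mul_sum]
  refine Finset.sum_congr rfl fun i _ => ?_
  simp
  ring

theorem integral_comp_torusLift (g : (Fin d → ℝ) → ℂ) :
    ∫ t, g (torusLift t) = ((1 / (2 * π) ^ d : ℝ) : ℂ) * ∫ p in torusBox d, g p := by
  have hpi : (0 : ℝ) < 2 * π := by positivity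
  set S : Set (Fin d → ℝ) := {x | ∀ i, x i ∈ Set.Ioc (-(1 / 2) : ℝ) (-(1 / 2) + 1)} with hS
  have hSm : MeasurableSet S := MeasurableSet.univ_pi' fun _ => measurableSet_Ioc
  have himage : (-(2 * π)) • S = Set.univ.pi fun _ => Set.Ico (-π) π := by
    ext x
    rw [Set.mem_smul_set_iff_inv_smul_mem₀ (neg_ne_zero.2 hpi.ne')]
    simp only [hS, Set.mem_ofPred_eq, Pi.smul_apply, smul_eq_mul, Set.mem_Ioc, Set.mem_pi,
      Set.mem_univ, forall_true_left, inv_neg, neg_mul, Set.mem_Ico]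
    refine forall_congr' fun i => ?_
    rw [inv_mul_eq_div, neg_lt_neg_iff, neg_le, div_lt_iff₀ hpi, le_div_iff₀ hpi]
    constructor <;> rintro ⟨h, h'⟩ <;> constructor <;> linarith
  have hbox : (Set.univ.pi fun _ : Fin d => Set.Ico (-π) π) =ᵐ[volume] torusBox d := by
    rw [torusBox, Set.pi_univ_Icc]
    exact Measure.univ_pi_Ico_ae_eq_Icc
  calc ∫ t, g (torusLift t) = ∫ x in S, g ((-(2 * π)) • x) := by
        rw [← integral_subtype_comap hSm fun x => g ((-(2 * π)) • x)]
        exact (UnitAddTorus.measurePreserving_equivPiIoc _).integral_comp' fun x : S =>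
          g ((-(2 * π)) • (x : Fin d → ℝ))
    _ = ((1 / (2 * π) ^ d : ℝ) : ℂ) * ∫ p in torusBox d, g p := by
        rw [Measure.setIntegral_comp_smul volume g _ (neg_ne_zero.2 hpi.ne'), himage,
          setIntegral_congr_set hbox]
        simp [abs_of_pos Real.pi_pos, Algebra.smul_def]

theorem memLp_comp_torusLift (f : C(Fin d → ℝ, ℂ)) :
    MemLp (fun t => f (torusLift t)) 2 volume := by
  obtain ⟨B, hB⟩ := (isCompact_torusBox d).exists_bound_of_continuousOn f.continuous.continuousOn
  exact MemLp.of_bound (f.measurable.comp measurable_torusLift).aestronglyMeasurable B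
    (Filter.Eventually.of_forall fun t => hB _ (torusLift_mem_torusBox t))

/-- The sequence of Fourier coefficients on the cube `[-π, π]^d`, as a linear map from continuous
symbols to `ℓ²(ℤ^d)`. -/
def fourierSeq : C(Fin d → ℝ, ℂ) →ₗ[ℂ] L2 d where
  toFun f := UnitAddTorus.mFourierBasis.repr (memLp_comp_torusLift f).toLp
  map_add' f g := by rw [← map_add]; rfl
  map_smul' a f := by rw [← map_smul]; rfl

theorem fourierSeq_apply (f : C(Fin d → ℝ, ℂ)) (m : Γd d) :
    (fourierSeq f : ∀ _ : Γd d, ℂ) m = torusCoeff f m := by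
  refine (UnitAddTorus.mFourierBasis_repr _ m).trans ?_
  rw [torusCoeff, ← integral_comp_torusLift, UnitAddTorus.mFourierCoeff]
  refine integral_congr_ae ?_
  filter_upwards [(memLp_comp_torusLift f).coeFn_toLp] with t ht
  rw [ht, character_torusLift, smul_eq_mul, mul_comm]

theorem inner_fourierSeq (f g : C(Fin d → ℝ, ℂ)) :
    ⟪fourierSeq f, fourierSeq g⟫ = torusCoeff (fun p => (starRingEnd ℂ) (f p) * g p) 0 := by
  refine (UnitAddTorus.mFourierBasis.repr.inner_map_map _ _).trans ?_
  simp only [torusCoeff, character_zero, mul_one]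
  rw [L2.inner_def, ← integral_comp_torusLift]
  refine integral_congr_ae ?_
  filter_upwards [(memLp_comp_torusLift f).coeFn_toLp, (memLp_comp_torusLift g).coeFn_toLp]
    with t hf hg
  rw [hf, hg, RCLike.inner_apply, mul_comm]

theorem fourierSeq_character_neg (x : Γd d) :
    fourierSeq ⟨character (-x), continuous_character (-x)⟩ = delta x := by
  have hLp : (memLp_comp_torusLift ⟨character (-x), continuous_character (-x)⟩).toLp =
      UnitAddTorus.mFourierBasis x := by
    refine Lp.ext ?_
    rw [UnitAddTorus.coe_mFourierBasis]
    filter_upwards [MemLp.coeFn_toLp (memLp_comp_torusLift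
      ⟨character (-x), continuous_character (-x)⟩), UnitAddTorus.coeFn_mFourierLp 2 x] with t h1 h2
    rw [h1, h2, ContinuousMap.coe_mk, character_torusLift, neg_neg]
  exact (congrArg _ hLp).trans (UnitAddTorus.mFourierBasis.repr_self x)

end Plancherel

/-! ### Multipliers and the free resolvent -/

theorem inner_delta_left (x : Γd d) (ψ : L2 d) : ⟪delta x, ψ⟫ = (ψ : ∀ _ : Γd d, ℂ) x := by
  rw [delta, lp.inner_single_left]
  simp

theorem IsMultiplier.apply_delta {e : (Fin d → ℝ) → ℝ} {H : L2 d →L[ℂ] L2 d}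
    (hH : IsMultiplier e H) (he : Continuous e) (y : Γd d) :
    H (delta y) = fourierSeq ⟨fun p => e p * character (-y) p, by
      have := continuous_character (-y); fun_prop⟩ := by
  ext x
  rw [← inner_delta_left, hH, fourierSeq_apply, ContinuousMap.coe_mk, torusCoeff_mul_character,
    ← sub_eq_add_neg]
  rfl

theorem IsMultiplier.adjoint_fourierSeq {e : (Fin d → ℝ) → ℝ} {H : L2 d →L[ℂ] L2 d}
    (hH : IsMultiplier e H) (he : Continuous e) (f : C(Fin d → ℝ, ℂ)) :
    ContinuousLinearMap.adjoint H (fourierSeq f) =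
      fourierSeq ⟨fun p => e p * f p, by fun_prop⟩ := by
  ext x
  rw [← inner_delta_left, ContinuousLinearMap.adjoint_inner_right, hH.apply_delta he,
    inner_fourierSeq, fourierSeq_apply]
  simp only [ContinuousMap.coe_mk, torusCoeff, map_mul, Complex.conj_ofReal, ← character_neg,
    neg_neg, character_zero, mul_one]
  congr 2
  funext p
  ring

theorem sub_ofReal_ne_zero {z : ℂ} (hz : z.im ≠ 0) (t : ℝ) : z - t ≠ 0 := fun h =>
  hz (by simpa using congrArg Complex.im h)

theorem continuous_inv_sub {e : (Fin d → ℝ) → ℝ} (he : Continuous e) {z : ℂ} (hz : z.im ≠ 0) :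
    Continuous fun p => (z - e p)⁻¹ :=
  Continuous.inv₀ (by fun_prop) fun p => sub_ofReal_ne_zero hz (e p)

-- The resolvent of the adjoint sends `δ_x` to an explicit Fourier sequence, so that `ψ(x)` is read
-- off by pairing `(z - H)ψ` with it; no resolvent of `H` needs to be constructed.
theorem IsMultiplier.hasSum_free_resolvent {e : (Fin d → ℝ) → ℝ} {H : L2 d →L[ℂ] L2 d}
    (hH : IsMultiplier e H) (he : Continuous e) {z : ℂ} (hz : z.im ≠ 0) (ψ : L2 d) (x : Γd d) :
    HasSum (fun u => torusCoeff (fun p => (z - e p)⁻¹) (x - u) *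
      ((z • ψ - H ψ : L2 d) : ∀ _ : Γd d, ℂ) u) ((ψ : ∀ _ : Γd d, ℂ) x) := by
  let g : C(Fin d → ℝ, ℂ) := ⟨fun p => (starRingEnd ℂ) (z - e p)⁻¹ * character (-x) p,
    (Complex.continuous_conj.comp (continuous_inv_sub he hz)).mul (continuous_character _)⟩
  have hg : (starRingEnd ℂ) z • fourierSeq g - ContinuousLinearMap.adjoint H (fourierSeq g) =
      delta x := by
    rw [hH.adjoint_fourierSeq he, ← map_smul, ← map_sub, ← fourierSeq_character_neg]
    congr 1
    ext p
    have hne : (starRingEnd ℂ) z - e p ≠ 0 := sub_ofReal_ne_zero (by simpa using hz) _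
    simp only [g, ContinuousMap.sub_apply, ContinuousMap.smul_apply, ContinuousMap.coe_mk,
      smul_eq_mul, map_inv₀, map_sub, Complex.conj_ofReal]
    field_simp
  have hpair : ⟪fourierSeq g, z • ψ - H ψ⟫ = (ψ : ∀ _ : Γd d, ℂ) x := by
    rw [← inner_delta_left, ← hg, inner_sub_left, inner_sub_right, inner_smul_left,
      inner_smul_right, Complex.conj_conj, ContinuousLinearMap.adjoint_inner_left]
  rw [← hpair]
  refine (lp.hasSum_inner (𝕜 := ℂ) (fourierSeq g) (z • ψ - H ψ)).congr_fun fun u => ?_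
  rw [RCLike.inner_apply', fourierSeq_apply, conj_torusCoeff]
  simp only [g, ContinuousMap.coe_mk, map_mul, Complex.conj_conj, ← character_neg, neg_neg]
  rw [torusCoeff_mul_character, neg_add_eq_sub]

/-! ### Weights and the norms `Φ_{m,n}` -/

theorem lnorm_nonneg (x : Γd d) : 0 ≤ lnorm x := Real.sqrt_nonneg _

theorem lnorm_zero : lnorm (0 : Γd d) = 0 := by simp [lnorm]

theorem lnorm_eq_norm (x : Γd d) :
    lnorm x = ‖(WithLp.toLp 2 fun i => (x i : ℝ) : EuclideanSpace ℝ (Fin d))‖ := by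
  rw [EuclideanSpace.norm_eq, lnorm]
  simp

theorem lnorm_sub_le (x y : Γd d) : lnorm (x - y) ≤ lnorm x + lnorm y := by
  simp only [lnorm_eq_norm]
  refine le_of_eq_of_le (congrArg norm ?_) (norm_sub_le _ _)
  ext i
  simp

theorem one_le_one_add_lnorm (x : Γd d) : 1 ≤ 1 + lnorm x :=
  le_add_of_nonneg_right (lnorm_nonneg x)

theorem one_add_lnorm_sub_le (x y : Γd d) :
    1 + lnorm (x - y) ≤ (1 + lnorm x) * (1 + lnorm y) := by
  nlinarith [lnorm_sub_le x y, mul_nonneg (lnorm_nonneg x) (lnorm_nonneg y)]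

theorem tsum_pow_le_pow_tsum {ι : Type*} (f : ι → ℝ≥0∞) {m : ℕ} (hm : m ≠ 0) :
    ∑' i, f i ^ m ≤ (∑' i, f i) ^ m := by
  obtain ⟨k, rfl⟩ := Nat.exists_eq_succ_of_ne_zero hm
  calc ∑' i, f i ^ (k + 1) ≤ ∑' i, (∑' j, f j) ^ k * f i := by
        refine ENNReal.tsum_le_tsum fun i => ?_
        rw [pow_succ]
        gcongr
        exact ENNReal.le_tsum i
    _ = (∑' i, f i) ^ (k + 1) := by rw [ENNReal.tsum_mul_left, pow_succ]

theorem Phi_mono_right (m : ℕ) {n n' : ℕ} (h : n ≤ n') (V : Γd d → ℝ) :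
    Phi m n V ≤ Phi m n' V := by
  unfold Phi
  gcongr with x
  exact one_le_one_add_lnorm x

theorem Phi_one_mul_le {m : ℕ} (hm : m ≠ 0) (n : ℕ) (V : Γd d → ℝ) :
    Phi 1 (m * n) V ≤ Phi m n V := by
  refine le_of_eq_of_le ?_ (tsum_pow_le_pow_tsum _ hm)
  simp only [Phi, pow_one, Nat.cast_one, div_one, Real.rpow_one]
  refine tsum_congr fun x => ?_
  have hx := lnorm_nonneg x
  rw [← ENNReal.ofReal_pow (by positivity), mul_pow, ← pow_mul, mul_comm n m, one_div,
    Real.rpow_inv_natCast_pow (abs_nonneg _) hm]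

theorem hasSum_of_Phi_one_ne_top {n : ℕ} {V : Γd d → ℝ} (hV : Phi 1 n V ≠ ⊤) :
    HasSum (fun x => |V x| * (1 + lnorm x) ^ n) (Phi 1 n V).toReal := by
  simp only [Phi, pow_one, Nat.cast_one, div_one, Real.rpow_one] at hV ⊢
  rw [ENNReal.tsum_toReal_eq fun _ => ENNReal.ofReal_ne_top]
  refine (ENNReal.hasSum_toReal hV).congr_fun fun x => ?_
  have hx := lnorm_nonneg x
  rw [ENNReal.toReal_ofReal (by positivity)]

/-! ### The Lippmann–Schwinger equation with a small potential -/

-- The weighted sum `T = Σ w |V| |ψ|` satisfies `T ≤ (w y + T) / 2`, and it is finite a priori.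
theorem norm_le_of_lippmannSchwinger {ι A : Type*} [NormedRing A] {G : ι → ι → A} {V ψ : ι → A}
    {w : ι → ℝ} {B C : ℝ} (hw : ∀ u, 1 ≤ w u) (hG : ∀ x u, ‖G x u‖ ≤ C * w x * w u)
    (hV : Summable fun u => ‖V u‖ * w u ^ 2) (hCV : C * ∑' u, ‖V u‖ * w u ^ 2 ≤ 1 / 2)
    (hψ : ∀ u, ‖ψ u‖ ≤ B) (y : ι) (h : ∀ x, HasSum (fun u => G x u * (V u * ψ u)) (ψ x - G x y))
    (x : ι) : ‖ψ x‖ ≤ 2 * C * w x * w y := by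
  have hw0 (u : ι) : 0 < w u := zero_lt_one.trans_le (hw u)
  have hCw (u : ι) : 0 ≤ C * w u :=
    nonneg_of_mul_nonneg_left ((norm_nonneg _).trans (hG u u)) (hw0 u)
  have hsum : Summable fun u => w u * (‖V u‖ * ‖ψ u‖) := by
    refine Summable.of_nonneg_of_le (fun u => ?_) (fun u => ?_) (hV.mul_right B)
    · have := hw0 u
      positivity
    · calc w u * (‖V u‖ * ‖ψ u‖) = ‖V u‖ * w u * ‖ψ u‖ := by ring
        _ ≤ ‖V u‖ * w u ^ 2 * B := by
          have := hw0 u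
          gcongr
          exacts [le_self_pow₀ (hw u) two_ne_zero, hψ u]
  set T := ∑' u, w u * (‖V u‖ * ‖ψ u‖)
  have hbound (v : ι) : ‖ψ v‖ ≤ C * w v * (w y + T) := by
    have htail : ‖ψ v - G v y‖ ≤ C * w v * T := by
      rw [← (h v).tsum_eq]
      refine tsum_of_norm_bounded (hsum.hasSum.mul_left (C * w v)) fun u => ?_
      calc ‖G v u * (V u * ψ u)‖ ≤ ‖G v u‖ * (‖V u‖ * ‖ψ u‖) :=
            (norm_mul_le _ _).trans (by gcongr; exact norm_mul_le _ _)
        _ ≤ C * w v * w u * (‖V u‖ * ‖ψ u‖) := by gcongr; exact hG v u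
        _ = C * w v * (w u * (‖V u‖ * ‖ψ u‖)) := by ring
    linarith [norm_sub_norm_le (ψ v) (G v y), hG v y]
  have hT0 : 0 ≤ T := tsum_nonneg fun u => by have := hw0 u; positivity
  have hTle : T ≤ (C * ∑' u, ‖V u‖ * w u ^ 2) * (w y + T) := by
    rw [mul_right_comm, ← tsum_mul_left]
    refine hsum.tsum_le_tsum (fun u => ?_) (hV.mul_left _)
    have := hw0 u
    calc w u * (‖V u‖ * ‖ψ u‖) ≤ w u * (‖V u‖ * (C * w u * (w y + T))) := by
          gcongr; exact hbound u
      _ = C * (w y + T) * (‖V u‖ * w u ^ 2) := by ring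
  have hTy : T ≤ w y := by nlinarith [hw0 y]
  calc ‖ψ x‖ ≤ C * w x * (w y + T) := hbound x
    _ ≤ C * w x * (w y + w y) := by gcongr; exact hCw x
    _ = 2 * C * w x * w y := by ring

theorem delta_apply (y u : Γd d) :
    (delta y : ∀ _ : Γd d, ℂ) u = (Pi.single y 1 : Γd d → ℂ) u :=
  congrFun (lp.coeFn_single 2 y 1) u

theorem IsMultiplier.hasSum_lippmannSchwinger {e : (Fin d → ℝ) → ℝ} {V : Γd d → ℝ}
    {H M R : L2 d →L[ℂ] L2 d} (hH : IsMultiplier e H) (he : Continuous e) (hM : IsMulOp V M)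
    {z : ℂ} (hz : z.im ≠ 0) (hR : IsResolventAt (H + M) z R) (x y : Γd d) :
    HasSum (fun u => torusCoeff (fun p => (z - e p)⁻¹) (x - u) *
      ((V u : ℂ) * (R (delta y) : ∀ _ : Γd d, ℂ) u))
      ((R (delta y) : ∀ _ : Γd d, ℂ) x - torusCoeff (fun p => (z - e p)⁻¹) (x - y)) := by
  have heq : z • R (delta y) - H (R (delta y)) = delta y + M (R (delta y)) := by
    have := congrArg (fun T : L2 d →L[ℂ] L2 d => T (delta y)) hR.2
    simp only [ContinuousLinearMap.comp_apply, _root_.sub_apply, _root_.smul_apply,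
      _root_.add_apply, _root_.one_apply_eq_self] at this
    rwa [← sub_sub, sub_eq_iff_eq_add] at this
  have hfree := hH.hasSum_free_resolvent he hz (R (delta y)) x
  have hdelta : HasSum (fun u => torusCoeff (fun p => (z - e p)⁻¹) (x - u) *
      (delta y : ∀ _ : Γd d, ℂ) u) (torusCoeff (fun p => (z - e p)⁻¹) (x - y)) := by
    convert! hasSum_single y fun u hu => ?_
    · simp [delta_apply]
    · simp [delta_apply, hu]
  refine (hfree.sub hdelta).congr_fun fun u => ?_
  rw [heq, lp.coeFn_add, Pi.add_apply, hM]
  ring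

theorem IsMultiplier.norm_inner_resolvent_le {e : (Fin d → ℝ) → ℝ} {V : Γd d → ℝ}
    {H M R : L2 d →L[ℂ] L2 d} (hH : IsMultiplier e H) (he : Continuous e) (hM : IsMulOp V M)
    {z : ℂ} (hz : z.im ≠ 0) (hR : IsResolventAt (H + M) z R) {C : ℝ} (hC : 0 < C)
    (hfree : ∀ m, ‖torusCoeff (fun p => (z - e p)⁻¹) m‖ ≤ C * (1 + lnorm m))
    (hV : Phi 1 2 V ≤ ENNReal.ofReal (1 / (2 * C))) (x y : Γd d) :
    ‖⟪delta x, R (delta y)⟫‖ ≤ 2 * C * (1 + lnorm x) * (1 + lnorm y) := by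
  have hsum := hasSum_of_Phi_one_ne_top (hV.trans_lt ENNReal.ofReal_lt_top).ne
  have hsmall : C * (Phi 1 2 V).toReal ≤ 1 / 2 := by
    rw [← le_div_iff₀' hC, div_div]
    exact ENNReal.toReal_le_of_le_ofReal (by positivity) hV
  have hnorm (u : Γd d) : ‖(V u : ℂ)‖ = |V u| := by rw [Complex.norm_real, Real.norm_eq_abs]
  rw [inner_delta_left]
  refine norm_le_of_lippmannSchwinger (V := fun u => (V u : ℂ)) one_le_one_add_lnorm
    (fun v u => ?_) ?_ ?_ (fun u => lp.norm_apply_le_norm two_ne_zero _ u) y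
    (fun v => hH.hasSum_lippmannSchwinger he hM hz hR v y) x
  · calc ‖torusCoeff (fun p => (z - e p)⁻¹) (v - u)‖ ≤ C * (1 + lnorm (v - u)) := hfree _
      _ ≤ C * (1 + lnorm v) * (1 + lnorm u) := by
        rw [mul_assoc]
        gcongr
        exact one_add_lnorm_sub_le v u
  · simpa only [hnorm] using hsum.summable
  · simpa only [hnorm, hsum.tsum_eq] using hsmall

section MorseSymbols

open Filter Topology

/-! ### The gradient of a Morse function near its critical points -/

theorem eventually_mul_norm_sub_le_norm_sub {𝕜 E F : Type*} [NontriviallyNormedField 𝕜]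
    [CompleteSpace 𝕜] [NormedAddCommGroup E] [NormedSpace 𝕜 E] [FiniteDimensional 𝕜 E]
    [NormedAddCommGroup F] [NormedSpace 𝕜 F] {f : E → F} {f' : E →L[𝕜] F} {x : E}
    (hf : HasFDerivAt f f' x) (hf' : Function.Injective f') :
    ∃ c : ℝ, 0 < c ∧ ∀ᶠ y in 𝓝 x, c * ‖y - x‖ ≤ ‖f y - f x‖ := by
  obtain ⟨K, -, hK⟩ := f'.toLinearMap.exists_antilipschitzWith (LinearMap.ker_eq_bot.2 hf')
  obtain ⟨C, hC, hO⟩ := (hf.isTheta_sub (hK.isInducing f'.continuous)).2.exists_pos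
  refine ⟨C⁻¹, inv_pos.2 hC, ?_⟩
  filter_upwards [hO.bound] with y hy
  rwa [inv_mul_le_iff₀ hC]

theorem fderiv_apply_eq_sum_pd (f : (Fin d → ℝ) → ℝ) (p v : Fin d → ℝ) :
    fderiv ℝ f p v = ∑ k, v k * pd f k p := by
  conv_lhs => rw [pi_eq_sum_univ' v]
  simp only [map_sum, map_smul, smul_eq_mul, pd]

theorem contDiff_pd {n : ℕ} {f : (Fin d → ℝ) → ℝ} (hf : ContDiff ℝ (n + 1) f) (k : Fin d) :
    ContDiff ℝ n (pd f k) :=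
  (hf.fderiv_right le_rfl).clm_apply contDiff_const

theorem contDiff_gradSq {n : ℕ} {f : (Fin d → ℝ) → ℝ} (hf : ContDiff ℝ (n + 1) f) :
    ContDiff ℝ n (gradSq f) :=
  ContDiff.sum fun k _ => (contDiff_pd hf k).pow 2

theorem gradSq_nonneg (f : (Fin d → ℝ) → ℝ) (p : Fin d → ℝ) : 0 ≤ gradSq f p :=
  Finset.sum_nonneg fun _ _ => sq_nonneg _

theorem pd_sq_le_gradSq (f : (Fin d → ℝ) → ℝ) (k : Fin d) (p : Fin d → ℝ) :
    pd f k p ^ 2 ≤ gradSq f p :=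
  Finset.single_le_sum (f := fun k => pd f k p ^ 2) (fun _ _ => sq_nonneg _) (Finset.mem_univ k)

theorem gradSq_eq_zero_iff {f : (Fin d → ℝ) → ℝ} {p : Fin d → ℝ} :
    gradSq f p = 0 ↔ fderiv ℝ f p = 0 := by
  refine ⟨fun h => ?_, fun h => by simp [gradSq, pd, h]⟩
  have hpd (k : Fin d) : pd f k p = 0 :=
    pow_eq_zero_iff two_ne_zero |>.1 (le_antisymm (h ▸ pd_sq_le_gradSq f k p) (sq_nonneg _))
  ext v
  simp [fderiv_apply_eq_sum_pd, hpd]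

theorem IsMorse.exists_mul_norm_sq_le_gradSq {e : (Fin d → ℝ) → ℝ} (hM : IsMorse e)
    (he : ContDiff ℝ 2 e) {p₀ : Fin d → ℝ} (hp₀ : fderiv ℝ e p₀ = 0) :
    ∃ c : ℝ, 0 < c ∧ ∀ᶠ p in 𝓝 p₀, c * ‖p - p₀‖ ^ 2 ≤ gradSq e p := by
  let D : (Fin d → ℝ) →L[ℝ] (Fin d → ℝ) :=
    ContinuousLinearMap.pi fun k => fderiv ℝ (pd e k) p₀
  have hD : HasFDerivAt (fun p k => pd e k p) D p₀ := hasFDerivAt_pi.2 fun k =>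
    ((contDiff_pd (n := 1) he k).differentiable one_ne_zero p₀).hasFDerivAt
  have hinj : Function.Injective D := by
    rw [injective_iff_map_eq_zero]
    intro v hv
    refine Matrix.eq_zero_of_vecMul_eq_zero (hM p₀ hp₀) ?_
    rw [← hv]
    ext j
    exact (fderiv_apply_eq_sum_pd (pd e j) p₀ v).symm
  obtain ⟨c, hc, hlower⟩ := eventually_mul_norm_sub_le_norm_sub hD hinj
  refine ⟨c ^ 2, by positivity, ?_⟩
  filter_upwards [hlower] with p hp
  have hsup : ‖(fun k => pd e k p) - fun k => pd e k p₀‖ ≤ √(gradSq e p) := by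
    refine (pi_norm_le_iff_of_nonneg (Real.sqrt_nonneg _)).2 fun k => ?_
    have hk : pd e k p₀ = 0 := by simp [pd, hp₀]
    rw [Pi.sub_apply, hk, sub_zero]
    exact Real.abs_le_sqrt (pd_sq_le_gradSq e k p)
  rw [← mul_pow]
  exact (Real.le_sqrt (by positivity) (gradSq_nonneg e p)).1 (hp.trans hsup)

theorem IsMorse.ae_gradSq_pos {e : (Fin d → ℝ) → ℝ} (hM : IsMorse e) (he : ContDiff ℝ 2 e)
    (hd : d ≠ 0) : ∀ᵐ p, 0 < gradSq e p := by
  have : NeZero d := ⟨hd⟩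
  rw [ae_iff]
  refine measure_null_of_locally_null _ fun p₀ hp₀ => ?_
  have hcrit : fderiv ℝ e p₀ = 0 :=
    gradSq_eq_zero_iff.1 (le_antisymm (not_lt.1 hp₀) (gradSq_nonneg e p₀))
  obtain ⟨c, hc, hlower⟩ := hM.exists_mul_norm_sq_le_gradSq he hcrit
  refine ⟨_, inter_mem_nhdsWithin _ hlower, measure_mono_null ?_ (measure_singleton p₀)⟩
  rintro p ⟨hp, hcp⟩
  by_contra hne
  have := norm_pos_iff.2 (sub_ne_zero.2 hne)
  exact hp (lt_of_lt_of_le (by positivity) hcp)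

theorem integrableOn_ball_rpow_neg {E : Type*} [NormedAddCommGroup E] [NormedSpace ℝ E]
    [FiniteDimensional ℝ E] [MeasurableSpace E] [BorelSpace E] {μ : Measure E} [μ.IsAddHaarMeasure]
    {g : E → ℝ} (hg : Measurable g) {c s r : ℝ} {x₀ : E} (hc : 0 < c) (hs : 0 ≤ s)
    (hs' : 2 * s < Module.finrank ℝ E) (h : ∀ x ∈ Metric.ball x₀ r, c * ‖x - x₀‖ ^ 2 ≤ g x) :
    IntegrableOn (fun x => g x ^ (-s)) (Metric.ball x₀ r) μ := by
  have hrank : 0 < Module.finrank ℝ E := by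
    have : (0 : ℝ) < Module.finrank ℝ E := by linarith
    exact_mod_cast this
  have : Nontrivial E := Module.nontrivial_of_finrank_pos hrank
  have hshift : IntegrableOn (fun x => g (x + x₀) ^ (-s)) (Metric.ball 0 r) μ := by
    refine integrableOn_ball_of_norm_le_rpow (C := c ^ (-s)) hrank hs' ?_
      ((hg.comp (measurable_add_const x₀)).pow_const _).aestronglyMeasurable
    filter_upwards [ae_restrict_mem measurableSet_ball,
      ae_restrict_of_ae ((Set.countable_singleton (0 : E)).ae_notMem μ)] with x hx hx0
    have hlower := h (x + x₀) (by simpa using hx)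
    have hpos : 0 < ‖x‖ := norm_pos_iff.2 hx0
    rw [add_sub_cancel_right] at hlower
    calc ‖g (x + x₀) ^ (-s)‖ = g (x + x₀) ^ (-s) :=
          Real.norm_of_nonneg (Real.rpow_nonneg (le_trans (by positivity) hlower) _)
      _ ≤ (c * ‖x‖ ^ 2) ^ (-s) :=
          Real.rpow_le_rpow_of_nonpos (by positivity) hlower (by linarith)
      _ = c ^ (-s) * ‖x‖ ^ (-(2 * s)) := by
          rw [Real.mul_rpow hc.le (by positivity), ← Real.rpow_natCast, ← Real.rpow_mul hpos.le]
          norm_num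
  have hball : (fun x => x - x₀) ⁻¹' Metric.ball 0 r = Metric.ball x₀ r := by
    ext x
    simp [dist_eq_norm]
  rw [← hball]
  simpa [Function.comp_def] using ((measurePreserving_sub_right μ x₀).integrableOn_comp_preimage
    (Homeomorph.subRight x₀).measurableEmbedding).2 hshift

theorem IsMorse.locallyIntegrable_gradSq_rpow {e : (Fin d → ℝ) → ℝ} (hM : IsMorse e)
    (he : ContDiff ℝ 2 e) {s : ℝ} (hs : 0 ≤ s) (hsd : 2 * s < d) :
    LocallyIntegrable fun p => gradSq e p ^ (-s) := by
  intro p₀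
  have hcont : Continuous (gradSq e) := (contDiff_gradSq (n := 1) he).continuous
  rcases eq_or_ne (fderiv ℝ e p₀) 0 with hcrit | hreg
  · obtain ⟨c, hc, hlower⟩ := hM.exists_mul_norm_sq_le_gradSq he hcrit
    obtain ⟨r, hr, hball⟩ := Metric.eventually_nhds_iff_ball.1 hlower
    exact ⟨Metric.ball p₀ r, Metric.ball_mem_nhds _ hr,
      integrableOn_ball_rpow_neg hcont.measurable hc hs (by simpa) hball⟩
  · have hpos : gradSq e p₀ ≠ 0 := fun h => hreg (gradSq_eq_zero_iff.1 h)
    exact (hcont.continuousAt.rpow_const (Or.inl hpos)).integrableAtFilter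
      (hcont.measurable.pow_const _).stronglyMeasurable.stronglyMeasurableAtFilter
      (volume.finiteAt_nhds p₀)

end MorseSymbols

section IntegrationByParts

open Filter Topology

/-! ### Integration by parts on the torus -/

theorem integrableOn_torusBox {E : Type*} [NormedAddCommGroup E]
    {f : (Fin d → ℝ) → E} (hf : Continuous f) : IntegrableOn f (torusBox d) :=
  hf.continuousOn.integrableOn_compact (isCompact_torusBox d)

theorem integral_sum_fderiv_eq_zero {E : Type*} [NormedAddCommGroup E] [NormedSpace ℝ E]
    {X : Fin d → (Fin d → ℝ) → E} (hX : ∀ k, ContDiff ℝ 1 (X k))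
    (hper : ∀ k p (m : Γd d), X k (p + fun i => 2 * π * (m i : ℝ)) = X k p) :
    ∫ p in torusBox d, ∑ k, fderiv ℝ (X k) p (Pi.single k 1) = 0 := by
  have hcont : Continuous fun p => ∑ k, fderiv ℝ (X k) p (Pi.single k 1) :=
    continuous_finsetSum _ fun k _ =>
      ((hX k).continuous_fderiv one_ne_zero).clm_apply continuous_const
  obtain _ | n := d
  · simp
  have hint := integrableOn_torusBox hcont
  rw [torusBox, Set.pi_univ_Icc] at hint ⊢
  rw [integral_divergence_of_hasFDerivAt_off_countable' (fun _ => -π) (fun _ => π)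
    (fun _ => neg_le_self Real.pi_pos.le) X (fun k => fderiv ℝ (X k)) ∅ Set.countable_empty
    (fun k => (hX k).continuous.continuousOn)
    (fun p _ k => ((hX k).differentiable one_ne_zero p).hasFDerivAt) hint]
  refine Finset.sum_eq_zero fun k _ => sub_eq_zero.2 ?_
  have hface (x : Fin n → ℝ) :
      (k.insertNth (-π) x + fun i => 2 * π * ((Pi.single k 1 : Γd (n + 1)) i : ℝ)) =
        k.insertNth π x := by
    funext i
    refine Fin.succAboveCases k ?_ (fun j => ?_) i
    · simp
      ring
    · simp [Fin.succAbove_ne]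
  congr 1
  funext x
  rw [← hface, hper]

/-- The divergence `Σ_k ∂_{p_k} X_k` of a vector field. -/
def divergence (X : Fin d → (Fin d → ℝ) → ℝ) (p : Fin d → ℝ) : ℝ := ∑ k, pd (X k) k p

theorem continuous_divergence {X : Fin d → (Fin d → ℝ) → ℝ} (hX : ∀ k, ContDiff ℝ 1 (X k)) :
    Continuous (divergence X) :=
  continuous_finsetSum _ fun k _ => (contDiff_pd (n := 0) (hX k) k).continuous

theorem integral_sum_smul_fderiv {E : Type*} [NormedAddCommGroup E] [NormedSpace ℝ E]
    {X : Fin d → (Fin d → ℝ) → ℝ} (hX : ∀ k, ContDiff ℝ 1 (X k)) (hXper : ∀ k, Periodic2pi (X k))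
    {φ : (Fin d → ℝ) → E} (hφ : ContDiff ℝ 1 φ)
    (hφper : ∀ p (m : Γd d), φ (p + fun i => 2 * π * (m i : ℝ)) = φ p) :
    ∫ p in torusBox d, ∑ k, X k p • fderiv ℝ φ p (Pi.single k 1) =
      -∫ p in torusBox d, divergence X p • φ p := by
  have hsum : Continuous fun p => ∑ k, X k p • fderiv ℝ φ p (Pi.single k 1) :=
    continuous_finsetSum _ fun k _ => (hX k).continuous.smul
      ((hφ.continuous_fderiv one_ne_zero).clm_apply continuous_const)
  have hdiv : Continuous fun p => divergence X p • φ p :=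
    (continuous_divergence hX).smul hφ.continuous
  have hzero := integral_sum_fderiv_eq_zero (fun k => (hX k).smul hφ) fun k p m => by
    simp only [Pi.smul_apply', hXper k p m, hφper p m]
  rw [eq_neg_iff_add_eq_zero, ← integral_add (integrableOn_torusBox hsum)
    (integrableOn_torusBox hdiv), ← hzero]
  refine integral_congr_ae (Eventually.of_forall fun p => ?_)
  simp only [divergence, Finset.sum_smul, ← Finset.sum_add_distrib]
  refine Finset.sum_congr rfl fun k _ => ?_
  rw [fderiv_smul ((hX k).differentiable one_ne_zero p) (hφ.differentiable one_ne_zero p)]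
  simp [pd]

theorem sum_smul_fderiv_character_mul_comp (X : Fin d → (Fin d → ℝ) → ℝ) {e : (Fin d → ℝ) → ℝ}
    (he : Differentiable ℝ e) {L : ℝ → ℂ} (hL : Differentiable ℝ L) (m : Γd d) (p : Fin d → ℝ) :
    ∑ k, X k p • fderiv ℝ (fun p => character m p * L (e p)) p (Pi.single k 1) =
      (∑ k, X k p * pd e k p) • (character m p * deriv L (e p)) +
        Complex.I * (∑ k, X k p * m k : ℝ) * (character m p * L (e p)) := by
  have hcomp (k : Fin d) :
      fderiv ℝ (fun p => L (e p)) p (Pi.single k 1) = pd e k p • deriv L (e p) := by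
    have hfd := fderiv_comp p (hL (e p)) (he p)
    rw [Function.comp_def] at hfd
    rw [hfd, ContinuousLinearMap.comp_apply, fderiv_eq_smul_deriv, pd]
  have hmul := fderiv_fun_mul ((contDiff_character m).differentiable one_ne_zero p)
    ((hL.comp he) p)
  simp only [Function.comp_def] at hmul
  simp only [hmul, add_apply, smul_apply, hcomp, fderiv_character_single, Complex.real_smul,
    smul_eq_mul, Complex.ofReal_sum, Complex.ofReal_mul, Finset.sum_mul, Finset.mul_sum,
    ← Finset.sum_add_distrib]
  exact Finset.sum_congr rfl fun k _ => by push_cast; ring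

theorem integral_character_mul_deriv_comp {X : Fin d → (Fin d → ℝ) → ℝ}
    (hX : ∀ k, ContDiff ℝ 1 (X k)) (hXper : ∀ k, Periodic2pi (X k)) {e : (Fin d → ℝ) → ℝ}
    (he : ContDiff ℝ 1 e) (hper : Periodic2pi e) {L : ℝ → ℂ} (hL : ContDiff ℝ 1 L) (m : Γd d) :
    ∫ p in torusBox d, (∑ k, X k p * pd e k p) • (character m p * deriv L (e p)) =
      -∫ p in torusBox d, ((divergence X p : ℂ) + Complex.I * (∑ k, X k p * m k : ℝ)) *
        (character m p * L (e p)) := by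
  have hchar := continuous_character m
  have hpd (k : Fin d) : Continuous (pd e k) := (contDiff_pd (n := 0) he k).continuous
  have hdiv := continuous_divergence hX
  have hparts := integral_sum_smul_fderiv hX hXper ((contDiff_character m).mul (hL.comp he))
    fun p n => by simp only [Function.comp_apply, character_add_period, hper p n]
  simp only [Function.comp_def, sum_smul_fderiv_character_mul_comp X (he.differentiable one_ne_zero)
    (hL.differentiable one_ne_zero)] at hparts
  have := he.continuous
  have := hL.continuous
  rw [integral_add (integrableOn_torusBox (by fun_prop)) (integrableOn_torusBox (by fun_prop))]
    at hparts
  rw [eq_sub_of_add_eq hparts, ← neg_add', ← integral_add (integrableOn_torusBox (by fun_prop))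
    (integrableOn_torusBox (by fun_prop))]
  simp only [add_mul, Complex.real_smul]

end IntegrationByParts

section KeyEstimate

open Filter Topology

/-! ### The regularized vector field `∇𝔢 / (|∇𝔢|² + η)` -/

theorem Periodic2pi.pd {e : (Fin d → ℝ) → ℝ} (hper : Periodic2pi e) (k : Fin d) :
    Periodic2pi (pd e k) := by
  intro p m
  rw [LatSch.pd, LatSch.pd, ← fderiv_comp_add_right, funext fun q => hper q m]

theorem Periodic2pi.gradSq {e : (Fin d → ℝ) → ℝ} (hper : Periodic2pi e) :
    Periodic2pi (gradSq e) := fun p m => by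
  simp only [LatSch.gradSq, hper.pd _ p m]

/-- The regularization `∇𝔢 / (|∇𝔢|² + η)` of the vector field `∇𝔢 / |∇𝔢|²`, along which `𝔢` has
unit derivative. -/
def regField (e : (Fin d → ℝ) → ℝ) (η : ℝ) (k : Fin d) (p : Fin d → ℝ) : ℝ :=
  pd e k p / (gradSq e p + η)

theorem Periodic2pi.regField {e : (Fin d → ℝ) → ℝ} (hper : Periodic2pi e) (η : ℝ) (k : Fin d) :
    Periodic2pi (regField e η k) := fun p m => by
  rw [LatSch.regField, LatSch.regField, hper.pd, hper.gradSq]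

theorem gradSq_add_pos (e : (Fin d → ℝ) → ℝ) {η : ℝ} (hη : 0 < η) (p : Fin d → ℝ) :
    0 < gradSq e p + η :=
  add_pos_of_nonneg_of_pos (gradSq_nonneg e p) hη

theorem contDiff_regField {e : (Fin d → ℝ) → ℝ} (he : ContDiff ℝ 2 e) {η : ℝ} (hη : 0 < η)
    (k : Fin d) : ContDiff ℝ 1 (regField e η k) :=
  (contDiff_pd (n := 1) he k).div ((contDiff_gradSq (n := 1) he).add contDiff_const) fun p =>
    (gradSq_add_pos e hη p).ne'

theorem sum_regField_mul_pd (e : (Fin d → ℝ) → ℝ) (η : ℝ) (p : Fin d → ℝ) :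
    ∑ k, regField e η k p * pd e k p = gradSq e p / (gradSq e p + η) := by
  simp only [regField, gradSq, Finset.sum_div]
  exact Finset.sum_congr rfl fun k _ => by ring

theorem pd_gradSq {e : (Fin d → ℝ) → ℝ} (he : ContDiff ℝ 2 e) (k : Fin d) (p : Fin d → ℝ) :
    pd (gradSq e) k p = ∑ j, 2 * pd e j p * pd (pd e j) k p := by
  have hsum : HasFDerivAt (gradSq e) (∑ j, (2 * pd e j p) • fderiv ℝ (pd e j) p) p :=
    HasFDerivAt.fun_sum fun j _ => by
      simpa using (((contDiff_pd (n := 1) he j).differentiable one_ne_zero p).hasFDerivAt).pow 2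
  simp [pd, hsum.fderiv]

theorem divergence_regField {e : (Fin d → ℝ) → ℝ} (he : ContDiff ℝ 2 e) {η : ℝ} (hη : 0 < η)
    (p : Fin d → ℝ) :
    divergence (regField e η) p = ∑ k, (pd (pd e k) k p / (gradSq e p + η) -
      ∑ j, 2 * (pd e k p * pd e j p) * pd (pd e j) k p / (gradSq e p + η) ^ 2) := by
  refine Finset.sum_congr rfl fun k _ => ?_
  have hne := (gradSq_add_pos e hη p).ne'
  have hnum := ((contDiff_pd (n := 1) he k).differentiable one_ne_zero p).hasFDerivAt
  have hden := ((contDiff_gradSq (n := 1) he).differentiable one_ne_zero p).hasFDerivAt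
  have hquot : HasFDerivAt (regField e η k) _ p :=
    hnum.mul ((hasDerivAt_inv hne).comp_hasFDerivAt p (hden.add_const η))
  have hpd : pd (regField e η k) k p =
      pd (pd e k) k p / (gradSq e p + η) - pd e k p * pd (gradSq e) k p / (gradSq e p + η) ^ 2 := by
    rw [pd, hquot.fderiv]
    simp only [add_apply, smul_apply, smul_eq_mul]
    rw [← pd, ← pd]
    ring
  rw [hpd, pd_gradSq he, Finset.mul_sum, Finset.sum_div]
  congr 1
  exact Finset.sum_congr rfl fun j _ => by ring

theorem abs_pd_mul_pd_le_gradSq (e : (Fin d → ℝ) → ℝ) (k j : Fin d) (p : Fin d → ℝ) :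
    |pd e k p * pd e j p| ≤ gradSq e p := by
  rw [abs_mul, ← Real.mul_self_sqrt (gradSq_nonneg e p)]
  exact mul_le_mul (Real.abs_le_sqrt (pd_sq_le_gradSq e k p))
    (Real.abs_le_sqrt (pd_sq_le_gradSq e j p)) (abs_nonneg _) (Real.sqrt_nonneg _)

theorem abs_divergence_regField_le {e : (Fin d → ℝ) → ℝ} (he : ContDiff ℝ 2 e) {η : ℝ}
    (hη : 0 < η) (p : Fin d → ℝ) :
    |divergence (regField e η) p| ≤
      3 * (∑ k, ∑ j, |pd (pd e j) k p|) / (gradSq e p + η) := by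
  have hpos := gradSq_add_pos e hη p
  have hdiag (k : Fin d) : |pd (pd e k) k p / (gradSq e p + η)| ≤
      (∑ j, |pd (pd e j) k p|) / (gradSq e p + η) := by
    rw [abs_div, abs_of_pos hpos]
    gcongr
    exact Finset.single_le_sum (f := fun j => |pd (pd e j) k p|) (fun _ _ => abs_nonneg _)
      (Finset.mem_univ k)
  have hoff (k j : Fin d) :
      |2 * (pd e k p * pd e j p) * pd (pd e j) k p / (gradSq e p + η) ^ 2| ≤
        2 * |pd (pd e j) k p| / (gradSq e p + η) := by
    rw [abs_div, abs_mul, abs_mul, abs_two, abs_of_pos (pow_pos hpos 2),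
      div_le_div_iff₀ (pow_pos hpos 2) hpos]
    have hle : |pd e k p * pd e j p| ≤ gradSq e p + η :=
      (abs_pd_mul_pd_le_gradSq e k j p).trans (by linarith)
    calc 2 * |pd e k p * pd e j p| * |pd (pd e j) k p| * (gradSq e p + η)
        ≤ 2 * (gradSq e p + η) * |pd (pd e j) k p| * (gradSq e p + η) := by gcongr
      _ = 2 * |pd (pd e j) k p| * (gradSq e p + η) ^ 2 := by ring
  rw [divergence_regField he hη, Finset.mul_sum, Finset.sum_div]
  refine (Finset.abs_sum_le_sum_abs _ _).trans (Finset.sum_le_sum fun k _ => ?_)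
  calc |pd (pd e k) k p / (gradSq e p + η) -
        ∑ j, 2 * (pd e k p * pd e j p) * pd (pd e j) k p / (gradSq e p + η) ^ 2|
      ≤ (∑ j, |pd (pd e j) k p|) / (gradSq e p + η) +
        ∑ j, 2 * |pd (pd e j) k p| / (gradSq e p + η) :=
        (abs_sub _ _).trans (add_le_add (hdiag k)
          ((Finset.abs_sum_le_sum_abs _ _).trans (Finset.sum_le_sum fun j _ => hoff k j)))
    _ = 3 * (∑ j, |pd (pd e j) k p|) / (gradSq e p + η) := by
        rw [← Finset.sum_div, ← Finset.mul_sum]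
        ring

theorem abs_sum_regField_mul_le (e : (Fin d → ℝ) → ℝ) {η : ℝ} (hη : 0 < η) (m : Γd d)
    (p : Fin d → ℝ) :
    |∑ k, regField e η k p * m k| ≤ √(gradSq e p) * lnorm m / (gradSq e p + η) := by
  have hpos := gradSq_add_pos e hη p
  have hcs : |∑ k, pd e k p * m k| ≤ √(gradSq e p) * lnorm m := by
    rw [lnorm, ← Real.sqrt_mul (gradSq_nonneg e p)]
    exact Real.abs_le_sqrt (Finset.sum_mul_sq_le_sq_mul_sq _ _ _)
  have hfactor : ∑ k, regField e η k p * m k = (∑ k, pd e k p * m k) / (gradSq e p + η) := by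
    rw [Finset.sum_div]
    exact Finset.sum_congr rfl fun k _ => by rw [regField, div_mul_eq_mul_div]
  rw [hfactor, abs_div, abs_of_pos hpos]
  gcongr

theorem exists_norm_divergence_regField_add_le {e : (Fin d → ℝ) → ℝ} (he : ContDiff ℝ 2 e) :
    ∃ K : ℝ, 0 ≤ K ∧ ∀ η, 0 < η → ∀ (m : Γd d), ∀ p ∈ torusBox d,
      ‖(divergence (regField e η) p : ℂ) + Complex.I * (∑ k, regField e η k p * m k : ℝ)‖ ≤
        K * (1 + lnorm m) / (gradSq e p + η) := by
  have hpd (k : Fin d) : ContDiff ℝ 1 (pd e k) := contDiff_pd (n := 1) he k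
  have hhess (j k : Fin d) : Continuous (pd (pd e j) k) :=
    (contDiff_pd (n := 0) (hpd j) k).continuous
  have hgrad := (contDiff_gradSq (n := 1) he).continuous
  have hcont : Continuous fun p => 3 * (∑ k, ∑ j, |pd (pd e j) k p|) + √(gradSq e p) := by
    fun_prop
  obtain ⟨K, hK⟩ := (isCompact_torusBox d).exists_bound_of_continuousOn hcont.continuousOn
  refine ⟨|K|, abs_nonneg K, fun η hη m p hp => ?_⟩
  have hpos := gradSq_add_pos e hη p
  have hm := lnorm_nonneg m
  have hKp := (le_abs_self _).trans ((hK p hp).trans (le_abs_self K))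
  have hH : 0 ≤ ∑ k, ∑ j, |pd (pd e j) k p| := by positivity
  have hg := Real.sqrt_nonneg (gradSq e p)
  calc ‖(divergence (regField e η) p : ℂ) + Complex.I * (∑ k, regField e η k p * m k : ℝ)‖
      ≤ |divergence (regField e η) p| + |∑ k, regField e η k p * m k| := by
        refine (norm_add_le _ _).trans_eq ?_
        rw [norm_mul, Complex.norm_I, one_mul, Complex.norm_real, Complex.norm_real,
          Real.norm_eq_abs, Real.norm_eq_abs]
    _ ≤ (3 * (∑ k, ∑ j, |pd (pd e j) k p|) + √(gradSq e p) * lnorm m) / (gradSq e p + η) := by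
        rw [add_div]
        exact add_le_add (abs_divergence_regField_le he hη p) (abs_sum_regField_mul_le e hη m p)
    _ ≤ |K| * (1 + lnorm m) / (gradSq e p + η) := by
        gcongr
        nlinarith

/-! ### The key estimate -/

theorem tendsto_integral_div_add_smul {α E : Type*} [MeasurableSpace α] {μ : Measure α}
    [NormedAddCommGroup E] [NormedSpace ℝ E] {g : α → ℝ} {F : α → E} (hg : Measurable g)
    (hpos : ∀ᵐ a ∂μ, 0 < g a) (hF : Integrable F μ) :
    Tendsto (fun η => ∫ a, (g a / (g a + η)) • F a ∂μ) (𝓝[>] 0) (𝓝 (∫ a, F a ∂μ)) := by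
  refine tendsto_integral_filter_of_dominated_convergence (fun a => ‖F a‖)
    (Eventually.of_forall fun η => ?_) ?_ hF.norm ?_
  · exact (hg.div (hg.add_const η)).aestronglyMeasurable.smul hF.aestronglyMeasurable
  · filter_upwards [self_mem_nhdsWithin] with η hη
    filter_upwards [hpos] with a ha
    have hη : 0 < η := hη
    rw [norm_smul, Real.norm_of_nonneg (by positivity)]
    exact mul_le_of_le_one_left (norm_nonneg _) ((div_le_one (by positivity)).2 (by linarith))
  · filter_upwards [hpos] with a ha
    have hcont : ContinuousAt (fun η => (g a / (g a + η)) • F a) 0 :=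
      (continuousAt_const.div (by fun_prop) (by simpa using ha.ne')).smul continuousAt_const
    simpa [ContinuousAt, ha.ne'] using hcont.tendsto.mono_left nhdsWithin_le_nhds

theorem IsMorse.integrableOn_inv_gradSq {e : (Fin d → ℝ) → ℝ} (hM : IsMorse e) (hd : 3 ≤ d)
    (he : ContDiff ℝ 2 e) : IntegrableOn (fun p => (gradSq e p)⁻¹) (torusBox d) := by
  have hd' : (2 : ℝ) * 1 < d := by
    norm_num
    exact_mod_cast hd
  simpa only [Real.rpow_neg_one] using
    (hM.locallyIntegrable_gradSq_rpow he zero_le_one hd').integrableOn_isCompact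
      (isCompact_torusBox d)

theorem IsMorse.exists_norm_integral_character_mul_le {e : (Fin d → ℝ) → ℝ}
    (hM : IsMorse e) (hd : 3 ≤ d) (hper : Periodic2pi e) (he : ContDiff ℝ 2 e) :
    ∃ K : ℝ, 0 ≤ K ∧ ∀ L L' : ℝ → ℂ, (∀ t, HasDerivAt L (L' t) t) → Continuous L' → ∀ m : Γd d,
      ‖∫ p in torusBox d, character m p * L' (e p)‖ ≤
        K * (1 + lnorm m) * ∫ p in torusBox d, ‖L (e p)‖ * (gradSq e p)⁻¹ := by
  obtain ⟨K, hK0, hK⟩ := exists_norm_divergence_regField_add_le he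
  refine ⟨K, hK0, fun L L' hLL' hL' m => ?_⟩
  obtain rfl : deriv L = L' := funext fun t => (hLL' t).deriv
  have hL : ContDiff ℝ 1 L := contDiff_one_iff_deriv.2 ⟨fun t => (hLL' t).differentiableAt, hL'⟩
  have hchar := continuous_character m
  have hLe : Continuous fun p => L (e p) := hL.continuous.comp he.continuous
  have hL'e : Continuous fun p => deriv L (e p) := hL'.comp he.continuous
  have hgrad := (contDiff_gradSq (n := 1) he).continuous
  have hpos : ∀ᵐ p ∂volume.restrict (torusBox d), 0 < gradSq e p :=
    ae_restrict_of_ae (hM.ae_gradSq_pos he (by omega))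
  have hint : IntegrableOn (fun p => ‖L (e p)‖ * (gradSq e p)⁻¹) (torusBox d) :=
    (hM.integrableOn_inv_gradSq hd he).continuousOn_mul hLe.norm.continuousOn
      (isCompact_torusBox d)
  have hlim := (tendsto_integral_div_add_smul (F := fun p => character m p * deriv L (e p))
    hgrad.measurable hpos (integrableOn_torusBox (hchar.mul hL'e))).norm
  refine le_of_tendsto hlim (eventually_nhdsWithin_of_forall fun η hη => ?_)
  have hparts := integral_character_mul_deriv_comp (contDiff_regField he hη) (hper.regField η)
    (he.of_le one_le_two) hper hL m
  simp only [sum_regField_mul_pd] at hparts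
  rw [hparts, norm_neg, ← integral_const_mul]
  refine norm_integral_le_of_norm_le (hint.const_mul _) ?_
  filter_upwards [hpos, ae_restrict_mem (isCompact_torusBox d).measurableSet] with p hp hpbox
  have hη : 0 < η := hη
  have hm := lnorm_nonneg m
  rw [norm_mul, norm_mul, norm_character, one_mul]
  calc _ ≤ K * (1 + lnorm m) / (gradSq e p + η) * ‖L (e p)‖ := by
        gcongr
        exact hK η hη m p hpbox
    _ ≤ K * (1 + lnorm m) / gradSq e p * ‖L (e p)‖ := by
        gcongr
        linarith
    _ = K * (1 + lnorm m) * (‖L (e p)‖ * (gradSq e p)⁻¹) := by ring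

end KeyEstimate

section GreenFunction

/-! ### Complex powers and logarithms off the real axis -/

theorem sub_ofReal_mem_slitPlane {z : ℂ} (hz : z.im ≠ 0) (t : ℝ) : z - t ∈ Complex.slitPlane :=
  Or.inr (by simpa using hz)

theorem hasDerivAt_sub_ofReal (z : ℂ) (t : ℝ) : HasDerivAt (fun t : ℝ => z - t) (-1) t := by
  simpa using (Complex.ofRealCLM.hasDerivAt (x := t)).const_sub z

theorem hasDerivAt_neg_log_sub {z : ℂ} (hz : z.im ≠ 0) (t : ℝ) :
    HasDerivAt (fun t : ℝ => -Complex.log (z - t)) (z - t)⁻¹ t := by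
  refine ((hasDerivAt_sub_ofReal z t).clog_real (sub_ofReal_mem_slitPlane hz t)).fun_neg.congr_deriv
    ?_
  rw [neg_div, neg_neg, one_div]

theorem hasDerivAt_neg_cpow_div_sub {z : ℂ} (hz : z.im ≠ 0) {a : ℂ} (ha : a ≠ 0) (t : ℝ) :
    HasDerivAt (fun t : ℝ => -(z - t) ^ a / a) ((z - t) ^ (a - 1)) t := by
  have hpow : HasDerivAt (fun w : ℂ => w ^ a) _ (z - t) :=
    (hasDerivAt_id' (z - (t : ℂ))).cpow_const (sub_ofReal_mem_slitPlane hz t)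
  refine ((hpow.scomp t (hasDerivAt_sub_ofReal z t)).fun_neg.div_const a).congr_deriv ?_
  simp
  field_simp

theorem cos_mul_rpow_le_re_cpow {s : ℝ} (hs : 0 ≤ s) (hs' : s ≤ 1) (w : ℂ) :
    Real.cos (π * s) * ‖w‖ ^ (-s) ≤ (w ^ ((-s : ℝ) : ℂ)).re := by
  rw [Complex.cpow_ofReal_re, mul_comm]
  refine mul_le_mul_of_nonneg_left ?_ (by positivity)
  rw [mul_neg, Real.cos_neg, ← Real.cos_abs (w.arg * s), abs_mul, abs_of_nonneg hs]
  exact Real.cos_le_cos_of_nonneg_of_le_pi (by positivity)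
    (mul_le_of_le_one_right Real.pi_pos.le hs')
    (mul_le_mul_of_nonneg_right (Complex.abs_arg_le_pi w) hs)

theorem exists_norm_log_le_mul_rpow {ε : ℝ} (hε : 0 < ε) {T : ℝ} (hT : 0 ≤ T) :
    ∃ C : ℝ, 0 ≤ C ∧ ∀ w : ℂ, w ≠ 0 → ‖w‖ ≤ T → ‖Complex.log w‖ ≤ C * ‖w‖ ^ (-ε) := by
  refine ⟨1 / ε + (T + π) * T ^ ε, by positivity, fun w hw hwT => ?_⟩
  have hr : 0 < ‖w‖ := norm_pos_iff.2 hw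
  have hlower : -Real.log ‖w‖ ≤ 1 / ε * ‖w‖ ^ (-ε) := by
    have h := Real.log_le_rpow_div (inv_nonneg.2 hr.le) hε
    rwa [Real.log_inv, Real.inv_rpow hr.le, ← Real.rpow_neg hr.le, div_eq_inv_mul, ← one_div] at h
  have hupper : Real.log ‖w‖ ≤ T := (Real.log_le_self hr.le).trans hwT
  have hone : 1 ≤ T ^ ε * ‖w‖ ^ (-ε) := by
    rw [Real.rpow_neg hr.le, ← div_eq_mul_inv, one_le_div (by positivity)]
    exact Real.rpow_le_rpow hr.le hwT hε.le
  calc ‖Complex.log w‖ ≤ |Real.log ‖w‖| + π := by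
        refine (Complex.norm_le_abs_re_add_abs_im _).trans ?_
        rw [Complex.log_re, Complex.log_im]
        gcongr
        exact Complex.abs_arg_le_pi w
    _ ≤ 1 / ε * ‖w‖ ^ (-ε) + T + π := by
        have hnn : 0 ≤ 1 / ε * ‖w‖ ^ (-ε) := by positivity
        gcongr
        exact abs_le.2 ⟨by linarith, by linarith⟩
    _ ≤ 1 / ε * ‖w‖ ^ (-ε) + (T + π) * (T ^ ε * ‖w‖ ^ (-ε)) := by
        rw [add_assoc]
        gcongr
        exact le_mul_of_one_le_right (by positivity) hone
    _ = _ := by ring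

/-! ### Uniform bounds on the free Green function -/

theorem exists_forall_mem_torusBox_abs_le {e : (Fin d → ℝ) → ℝ} (he : Continuous e) :
    ∃ M : ℝ, 0 ≤ M ∧ ∀ p ∈ torusBox d, |e p| ≤ M := by
  obtain ⟨M, hM⟩ := (isCompact_torusBox d).exists_bound_of_continuousOn he.continuousOn
  exact ⟨|M|, abs_nonneg M, fun p hp => (hM p hp).trans (le_abs_self M)⟩

theorem continuous_norm_sub_rpow {e : (Fin d → ℝ) → ℝ} (he : Continuous e) {z : ℂ}
    (hz : z.im ≠ 0) (s : ℝ) : Continuous fun p => ‖z - e p‖ ^ s :=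
  Continuous.rpow_const (by fun_prop) fun p => Or.inl (norm_ne_zero_iff.2 (sub_ofReal_ne_zero hz _))

theorem norm_sub_ofReal_le {z : ℂ} {t T M : ℝ} (hz : ‖z‖ ≤ T) (ht : |t| ≤ M) :
    ‖z - t‖ ≤ T + M :=
  (norm_sub_le _ _).trans (add_le_add hz (by rwa [Complex.norm_real]))

theorem continuous_sub_ofReal_cpow {z : ℂ} (hz : z.im ≠ 0) (c : ℂ) :
    Continuous fun t : ℝ => (z - t) ^ c :=
  Continuous.cpow (by fun_prop) continuous_const (sub_ofReal_mem_slitPlane hz)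

theorem cos_mul_integral_norm_sub_rpow_le {e : (Fin d → ℝ) → ℝ} (he : Continuous e) {s : ℝ}
    (hs : 0 ≤ s) (hs' : s ≤ 1) {z : ℂ} (hz : z.im ≠ 0) :
    Real.cos (π * s) * ∫ p in torusBox d, ‖z - e p‖ ^ (-s) ≤
      ‖∫ p in torusBox d, (z - e p) ^ ((-s : ℝ) : ℂ)‖ := by
  have hint : IntegrableOn (fun p => (z - e p) ^ ((-s : ℝ) : ℂ)) (torusBox d) :=
    integrableOn_torusBox ((continuous_sub_ofReal_cpow hz _).comp he)
  calc Real.cos (π * s) * ∫ p in torusBox d, ‖z - e p‖ ^ (-s)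
      = ∫ p in torusBox d, Real.cos (π * s) * ‖z - e p‖ ^ (-s) := (integral_const_mul _ _).symm
    _ ≤ ∫ p in torusBox d, RCLike.re ((z - e p) ^ ((-s : ℝ) : ℂ)) :=
        integral_mono ((integrableOn_torusBox (continuous_norm_sub_rpow he hz _)).const_mul _)
          hint.re fun p => cos_mul_rpow_le_re_cpow hs hs' _
    _ = (∫ p in torusBox d, (z - e p) ^ ((-s : ℝ) : ℂ)).re := integral_re hint
    _ ≤ _ := Complex.re_le_norm _

theorem IsMorse.exists_integral_norm_sub_rpow_le {e : (Fin d → ℝ) → ℝ} (hM : IsMorse e)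
    (hd : 3 ≤ d) (hper : Periodic2pi e) (he : ContDiff ℝ 2 e) {s : ℝ} (hs : 0 ≤ s)
    (hs' : s < 1 / 2) (T : ℝ) :
    ∃ C : ℝ, ∀ z : ℂ, z.im ≠ 0 → ‖z‖ ≤ T → ∫ p in torusBox d, ‖z - e p‖ ^ (-s) ≤ C := by
  obtain ⟨K, hK0, hK⟩ := hM.exists_norm_integral_character_mul_le hd hper he
  obtain ⟨B, -, hB⟩ := exists_forall_mem_torusBox_abs_le he.continuous
  have hcos : 0 < Real.cos (π * s) := Real.cos_pos_of_mem_Ioo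
    ⟨by nlinarith [Real.pi_pos], by nlinarith [Real.pi_pos]⟩
  have ha : (0 : ℝ) < 1 - s := by linarith
  refine ⟨(K * ∫ p in torusBox d, (T + B) ^ (1 - s) / (1 - s) * (gradSq e p)⁻¹) /
    Real.cos (π * s), fun z hz hzT => ?_⟩
  have hexp : ((1 - s : ℝ) : ℂ) - 1 = ((-s : ℝ) : ℂ) := by push_cast; ring
  have hmain := hK (fun t => -(z - t) ^ ((1 - s : ℝ) : ℂ) / (1 - s : ℝ))
    (fun t => (z - t) ^ (((1 - s : ℝ) : ℂ) - 1))
    (hasDerivAt_neg_cpow_div_sub hz (Complex.ofReal_ne_zero.2 ha.ne'))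
    (continuous_sub_ofReal_cpow hz _) 0
  simp only [character_zero, one_mul, lnorm_zero, add_zero, mul_one, hexp, norm_div, norm_neg,
    Complex.norm_cpow_real, Complex.norm_real, Real.norm_of_nonneg ha.le] at hmain
  rw [le_div_iff₀' hcos]
  refine ((cos_mul_integral_norm_sub_rpow_le he.continuous hs (by linarith) hz).trans
    hmain).trans ?_
  refine mul_le_mul_of_nonneg_left (integral_mono_of_nonneg ?_
    ((hM.integrableOn_inv_gradSq hd he).const_mul _) ?_) hK0
  · have hgrad := gradSq_nonneg e
    filter_upwards with p
    have := hgrad p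
    positivity
  · refine ae_restrict_of_forall_mem (isCompact_torusBox d).measurableSet fun p hp => ?_
    have := gradSq_nonneg e p
    dsimp only
    gcongr
    exact norm_sub_ofReal_le hzT (hB p hp)

theorem rpow_neg_mul_inv_le {r b : ℝ} (hr : 0 ≤ r) (hb : 0 ≤ b) :
    r ^ (-(1 / 12) : ℝ) * b⁻¹ ≤ r ^ (-(1 / 3) : ℝ) + b ^ (-(4 / 3) : ℝ) := by
  have hpq : Real.HolderConjugate 4 (4 / 3) := by
    rw [Real.holderConjugate_iff]
    norm_num
  have hyoung := Real.young_inequality_of_nonneg (a := r ^ (-(1 / 12) : ℝ)) (b := b⁻¹)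
    (by positivity) (by positivity) hpq
  have hexp : (-(1 / 12) : ℝ) * 4 = -(1 / 3) := by norm_num
  rw [← Real.rpow_mul hr, Real.inv_rpow hb, ← Real.rpow_neg hb, hexp] at hyoung
  have hr' : 0 ≤ r ^ (-(1 / 3) : ℝ) := by positivity
  have hb' : 0 ≤ b ^ (-(4 / 3) : ℝ) := by positivity
  linarith

theorem norm_torusCoeff_le (f : (Fin d → ℝ) → ℂ) {C : ℝ} {m : Γd d}
    (hf : ‖∫ p in torusBox d, character m p * f p‖ ≤ C) : ‖torusCoeff f m‖ ≤ C / (2 * π) ^ d := by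
  have hcomm (p : Fin d → ℝ) : f p * character m p = character m p * f p := mul_comm _ _
  rw [torusCoeff, norm_mul, Complex.norm_real, Real.norm_of_nonneg (by positivity),
    one_div_mul_eq_div]
  simp only [hcomm]
  gcongr

theorem norm_torusCoeff_le_of_forall_norm_le {f : (Fin d → ℝ) → ℂ} {C : ℝ}
    (hf : ∀ p ∈ torusBox d, ‖f p‖ ≤ C) (m : Γd d) : ‖torusCoeff f m‖ ≤ C := by
  have hvol : volume.real (torusBox d) = (2 * π) ^ d := by
    rw [torusBox, measureReal_def, volume_pi_pi]
    simp [← two_mul, Real.pi_pos.le]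
  refine (norm_torusCoeff_le f (norm_setIntegral_le_of_norm_le_const
    (isCompact_torusBox d).measure_lt_top fun p hp => ?_)).trans_eq
    (by rw [hvol, mul_div_cancel_right₀ _ (by positivity)])
  rw [norm_mul, norm_character, one_mul]
  exact hf p hp

theorem IsMorse.exists_integral_norm_log_mul_inv_gradSq_le {e : (Fin d → ℝ) → ℝ}
    (hM : IsMorse e) (hd : 3 ≤ d) (hper : Periodic2pi e) (he : ContDiff ℝ 2 e) {T : ℝ}
    (hT : 0 ≤ T) :
    ∃ C : ℝ, ∀ z : ℂ, z.im ≠ 0 → ‖z‖ ≤ T →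
      ∫ p in torusBox d, ‖Complex.log (z - e p)‖ * (gradSq e p)⁻¹ ≤ C := by
  obtain ⟨B, hB0, hB⟩ := exists_forall_mem_torusBox_abs_le he.continuous
  obtain ⟨A, hA0, hA⟩ := exists_norm_log_le_mul_rpow (ε := 1 / 12) (by norm_num) (add_nonneg hT hB0)
  obtain ⟨I, hI⟩ := hM.exists_integral_norm_sub_rpow_le hd hper he (s := 1 / 3) (by norm_num)
    (by norm_num) T
  have hd' : (3 : ℝ) ≤ d := by exact_mod_cast hd
  have hJ : IntegrableOn (fun p => gradSq e p ^ (-(4 / 3) : ℝ)) (torusBox d) :=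
    (hM.locallyIntegrable_gradSq_rpow he (by norm_num) (by linarith)).integrableOn_isCompact
      (isCompact_torusBox d)
  set J : ℝ := ∫ p in torusBox d, gradSq e p ^ (-(4 / 3) : ℝ)
  refine ⟨A * (I + J), fun z hz hzT => ?_⟩
  have hzI := integrableOn_torusBox (continuous_norm_sub_rpow he.continuous hz (-(1 / 3)))
  calc ∫ p in torusBox d, ‖Complex.log (z - e p)‖ * (gradSq e p)⁻¹
      ≤ ∫ p in torusBox d, A * (‖z - e p‖ ^ (-(1 / 3) : ℝ) + gradSq e p ^ (-(4 / 3) : ℝ)) := by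
        refine integral_mono_of_nonneg ?_ ((hzI.add hJ).const_mul A)
          (ae_restrict_of_forall_mem (isCompact_torusBox d).measurableSet fun p hp => ?_)
        · exact .of_forall fun p => mul_nonneg (norm_nonneg _) (inv_nonneg.2 (gradSq_nonneg e p))
        have hlog := hA (z - e p) (sub_ofReal_ne_zero hz _) (norm_sub_ofReal_le hzT (hB p hp))
        refine (mul_le_mul_of_nonneg_right hlog (inv_nonneg.2 (gradSq_nonneg e p))).trans ?_
        rw [mul_assoc]
        exact mul_le_mul_of_nonneg_left
          (rpow_neg_mul_inv_le (norm_nonneg _) (gradSq_nonneg e p)) hA0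
    _ = A * ((∫ p in torusBox d, ‖z - e p‖ ^ (-(1 / 3) : ℝ)) + J) := by
        rw [integral_const_mul, integral_add hzI hJ]
    _ ≤ A * (I + J) := by
        gcongr
        exact hI z hz hzT

theorem IsMorse.exists_norm_torusCoeff_inv_sub_le_of_norm_le {e : (Fin d → ℝ) → ℝ}
    (hM : IsMorse e) (hd : 3 ≤ d) (hper : Periodic2pi e) (he : ContDiff ℝ 2 e) {T : ℝ}
    (hT : 0 ≤ T) :
    ∃ C : ℝ, ∀ z : ℂ, z.im ≠ 0 → ‖z‖ ≤ T → ∀ m : Γd d,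
      ‖torusCoeff (fun p => (z - e p)⁻¹) m‖ ≤ C * (1 + lnorm m) := by
  obtain ⟨K, hK0, hK⟩ := hM.exists_norm_integral_character_mul_le hd hper he
  obtain ⟨A, hA⟩ := hM.exists_integral_norm_log_mul_inv_gradSq_le hd hper he hT
  refine ⟨K * A / (2 * π) ^ d, fun z hz hzT m => ?_⟩
  have hmain := hK _ _ (hasDerivAt_neg_log_sub hz)
    ((by fun_prop : Continuous fun t : ℝ => z - t).inv₀ (sub_ofReal_ne_zero hz)) m
  simp only [norm_neg] at hmain
  have hm := lnorm_nonneg m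
  refine (norm_torusCoeff_le _ (hmain.trans
    (mul_le_mul_of_nonneg_left (hA z hz hzT) (by positivity)))).trans_eq ?_
  ring

theorem IsMorse.exists_norm_torusCoeff_inv_sub_le {e : (Fin d → ℝ) → ℝ} (hM : IsMorse e)
    (hd : 3 ≤ d) (hper : Periodic2pi e) (he : ContDiff ℝ 2 e) :
    ∃ C : ℝ, 0 < C ∧ ∀ z : ℂ, z.im ≠ 0 → ∀ m : Γd d,
      ‖torusCoeff (fun p => (z - e p)⁻¹) m‖ ≤ C * (1 + lnorm m) := by
  obtain ⟨B, hB0, hB⟩ := exists_forall_mem_torusBox_abs_le he.continuous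
  obtain ⟨C, hC⟩ := hM.exists_norm_torusCoeff_inv_sub_le_of_norm_le hd hper he (T := B + 1)
    (by positivity)
  refine ⟨max C 1, by positivity, fun z hz m => ?_⟩
  have hm := lnorm_nonneg m
  rcases le_or_gt ‖z‖ (B + 1) with hzB | hzB
  · exact (hC z hz hzB m).trans (by gcongr; exact le_max_left C 1)
  · have hone : ‖torusCoeff (fun p => (z - e p)⁻¹) m‖ ≤ 1 := by
      refine norm_torusCoeff_le_of_forall_norm_le (fun p hp => ?_) m
      rw [norm_inv]
      refine inv_le_one_of_one_le₀ ?_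
      have hsub := norm_sub_norm_le z (e p)
      rw [Complex.norm_real, Real.norm_eq_abs] at hsub
      linarith [hB p hp]
    exact hone.trans (one_le_mul_of_one_le_of_one_le (le_max_right C 1) (one_le_one_add_lnorm m))

end GreenFunction

end

theorem statement11_general {d : ℕ} (hd : 3 ≤ d) {e : (Fin d → ℝ) → ℝ} (hper : Periodic2pi e)
    (he : ContDiff ℝ 2 e) (hM : IsMorse e) :
    ∃ c c' : ℝ, 0 < c ∧ 0 < c' ∧ ∀ (V : Γd d → ℝ) (Hop Mv : L2 d →L[ℂ] L2 d),
      IsMultiplier e Hop → IsMulOp V Mv → Phi 1 2 V < ENNReal.ofReal c →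
      ∀ z : ℂ, z.im ≠ 0 → ∀ R : L2 d →L[ℂ] L2 d, IsResolventAt (Hop + Mv) z R →
        ∀ x y : Γd d, ‖⟪delta x, R (delta y)⟫‖ ≤ c' * (1 + lnorm x) * (1 + lnorm y) := by
  obtain ⟨C, hC, hfree⟩ := hM.exists_norm_torusCoeff_inv_sub_le hd hper he
  exact ⟨1 / (2 * C), 2 * C, by positivity, by positivity,
    fun V Hop Mv hH hMv hV z hz R hR =>
      hH.norm_inner_resolvent_le he.continuous hMv hz hR hC (hfree z hz) hV.le⟩

/-- Limiting absorption principle for `H(𝔢,V)`.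
There is `c(𝔢) > 0` such that if `Φ_{2,2}(V) < c(𝔢)` then there is `c' < ∞` with
`|⟨δ_x, (z - H(𝔢,V))⁻¹ δ_y⟩| ≤ c' (1+|x|)² (1+|y|)²` for all nonreal `z` and all
`x, y ∈ Γ`. -/
theorem statement11 (d : ℕ) (hd : 3 ≤ d)
    (e : (Fin d → ℝ) → ℝ) (he : IsDispersion e) (heC3 : ContDiff ℝ 3 e) (heM : CondM e) :
    ∃ c : ℝ, 0 < c ∧
      ∀ (V : Γd d → ℝ) (Hop Mv : L2 d →L[ℂ] L2 d),
        IsMultiplier e Hop → IsMulOp V Mv →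
        Phi 2 2 V < ENNReal.ofReal c →
        ∃ c' : ℝ, ∀ z : ℂ, z.im ≠ 0 → ∀ R : L2 d →L[ℂ] L2 d,
          IsResolventAt (Hop + Mv) z R →
          ∀ x y : Γd d,
            ‖(⟪delta x, R (delta y)⟫ : ℂ)‖ ≤ c' * (1 + lnorm x) ^ 2 * (1 + lnorm y) ^ 2 := by
  obtain ⟨c, c', hc, hc', hbound⟩ := statement11_general hd he.1 (heC3.of_le (by norm_num)) heM.1
  refine ⟨c, hc, fun V Hop Mv hH hMv hV => ⟨c', fun z hz R hR x y => ?_⟩⟩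
  have hV' : Phi 1 2 V < ENNReal.ofReal c :=
    calc Phi 1 2 V ≤ Phi 1 (2 * 2) V := Phi_mono_right 1 (by norm_num) V
      _ ≤ Phi 2 2 V := Phi_one_mul_le two_ne_zero 2 V
      _ < ENNReal.ofReal c := hV
  refine (hbound V Hop Mv hH hMv hV' z hz R hR x y).trans ?_
  have hx := one_le_one_add_lnorm x
  have hy := one_le_one_add_lnorm y
  gcongr <;> exact le_self_pow₀ ‹_› two_ne_zero

end LatSch
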